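/- For Lebesgue-almost every v ∈ ℝ⁴, the following both hold for the standard linear action of SL₄(ℤ) on ℝ⁴: the supremum of all ω such that |γv| ≤ |γ|^{−ω} holds for infinitely many γ ∈ SL₄(ℤ) is ≥ 1, and the supremum of all ω such that for every sufficiently large T > 0 there exists γ ∈ SL₄(ℤ) with |γv| ≤ T^{−ω} and |γ| ≤ T is ≥ 1. -/

import Mathlib

noncomputable section

/-- Sup norm of a 4×4 integer matrix (maximum of absolute values of entries), as a real. -/
def mnorm4 (γ : Matrix (Fin 4) (Fin 4) ℤ) : ℝ :=
  ((Finset.univ.sup fun ij : Fin 4 × Fin 4 => (γ ij.1 ij.2).natAbs : ℕ) : ℝ)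

/-- Sup norm of a vector in `ℝ⁴`. -/
def vnorm4 (w : Fin 4 → ℝ) : ℝ :=
  max (max |w 0| |w 1|) (max |w 2| |w 3|)

/-- The standard linear action of `SL₄(ℤ)` on `ℝ⁴`. -/
def sl4Act (γ : Matrix.SpecialLinearGroup (Fin 4) ℤ) (v : Fin 4 → ℝ) : Fin 4 → ℝ :=
  ((γ : Matrix (Fin 4) (Fin 4) ℤ).map (Int.cast : ℤ → ℝ)).mulVec v

open MeasureTheory Filter Topology

/-- If `P` holds almost everywhere on `ℝ`, it holds for almost every ratio of two distinct
coordinates. -/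
theorem ae_coord_ne_zero_and_div {n : ℕ} {P : ℝ → Prop} (hP : ∀ᵐ x : ℝ, P x)
    (i : Fin (n + 1)) (j : Fin n) :
    ∀ᵐ v : Fin (n + 1) → ℝ, v (i.succAbove j) ≠ 0 ∧ P (v i / v (i.succAbove j)) := by
  have hne : ∀ᵐ x : ℝ, x ≠ 0 := by simp [ae_iff]
  have hcoord : ∀ᵐ w : Fin n → ℝ, w j ≠ 0 :=
    (Measure.quasiMeasurePreserving_eval (fun _ : Fin n => (volume : Measure ℝ)) j).ae hne
  obtain ⟨s, hsP, hs, hs0⟩ := exists_measurable_superset_of_null (ae_iff.1 hP)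
  have hmeas : MeasurableSet {z : ℝ × (Fin n → ℝ) | z.2 j ≠ 0 ∧ z.1 / z.2 j ∉ s} := by
    have h2 : Measurable fun z : ℝ × (Fin n → ℝ) => z.2 j := by fun_prop
    exact ((h2 (measurableSet_singleton 0)).compl).inter
      ((measurable_fst.div h2) hs).compl
  have hprod : ∀ᵐ z : ℝ × (Fin n → ℝ), z.2 j ≠ 0 ∧ z.1 / z.2 j ∉ s := by
    refine (Measure.ae_prod_iff_ae_ae hmeas).2 ((Measure.ae_ae_comm hmeas).2 ?_)
    filter_upwards [hcoord] with w hw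
    have hq : ∀ᵐ x : ℝ, x / w j ∉ s := by
      rw [ae_iff]
      simp only [not_not, div_eq_mul_inv]
      have := Real.volume_preimage_mul_right (inv_ne_zero hw) s
      rw [hs0, mul_zero] at this
      exact this
    filter_upwards [hq] with x hx using ⟨hw, hx⟩
  have := (volume_preserving_piFinSuccAbove (fun _ : Fin (n + 1) => ℝ) i).quasiMeasurePreserving.ae
    hprod
  filter_upwards [this] with v hv
  exact ⟨hv.1, by_contra fun h => hv.2 (hsP h)⟩

theorem Real.ae_irrational : ∀ᵐ x : ℝ, Irrational x :=
  (Set.countable_range ((↑) : ℚ → ℝ)).ae_notMem _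

/-- A matrix in `SL₂(ℤ)` whose entries are controlled by `n` and whose rows, viewed as linear
forms at `(α, 1)`, are controlled by the inverse of the denominator `q` of a Dirichlet
approximation of `α`. -/
theorem exists_sl_two_of_dirichlet (α : ℝ) {n : ℕ} (hn : 0 < n) :
    ∃ r : ℚ, |α - r| ≤ 1 / ((n + 1) * r.den) ∧ ∃ a b c d : ℤ, a * d - b * c = 1 ∧
      |(a : ℝ)| ≤ n * (|α| + 2) ∧ |(b : ℝ)| ≤ n * (|α| + 2) ∧
      |(c : ℝ)| ≤ n * (|α| + 2) ∧ |(d : ℝ)| ≤ n * (|α| + 2) ∧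
      |a * α + b| ≤ 2 / r.den ∧ |c * α + d| ≤ 2 / r.den := by
  obtain ⟨r, hr, hrn⟩ := Real.exists_rat_abs_sub_le_and_den_le α hn
  refine ⟨r, hr, ?_⟩
  have hq : (0 : ℝ) < r.den := by exact_mod_cast r.den_pos
  have hqn : (r.den : ℝ) ≤ n := by exact_mod_cast hrn
  have hn1 : (1 : ℝ) ≤ n := by exact_mod_cast hn
  have hα := abs_nonneg α
  obtain ⟨u, w, huw⟩ : IsCoprime r.num (r.den : ℤ) := r.isCoprime_num_den
  have hqz : (0 : ℤ) < r.den := by exact_mod_cast r.den_pos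
  set c : ℤ := u % r.den with hc
  set d : ℤ := w + r.num * (u / r.den) with hd
  have hcu : (r.den : ℤ) * (u / r.den) + c = u := Int.mul_ediv_add_emod u r.den
  have hdet : (r.den : ℤ) * d - (-r.num) * c = 1 := by
    rw [hd]; linear_combination huw + r.num * hcu
  have hc0 : (0 : ℝ) ≤ c := by exact_mod_cast Int.emod_nonneg u hqz.ne'
  have hcq : (c : ℝ) ≤ r.den := by exact_mod_cast (Int.emod_lt_of_pos u hqz).le
  have hrα : |(r.den : ℝ) * α - r.num| ≤ 1 / (n + 1) := by
    have h : (r.den : ℝ) * α - r.num = r.den * (α - r) := by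
      rw [Rat.cast_def r]; field_simp
    rw [h, abs_mul, abs_of_pos hq]
    calc (r.den : ℝ) * |α - r| ≤ r.den * (1 / ((n + 1) * r.den)) := by gcongr
      _ = 1 / (n + 1) := by field_simp
  have hn_inv : 1 / ((n : ℝ) + 1) ≤ 1 / r.den := by gcongr; linarith
  have hq1 : 1 / (r.den : ℝ) ≤ 1 := by
    rw [div_le_one hq]; exact_mod_cast r.den_pos
  have htwo : 2 / (r.den : ℝ) = 1 / r.den + 1 / r.den := by ring
  have hcd : |(c : ℝ) * α + d| ≤ 2 / r.den := by
    have hdetR : (r.den : ℝ) * d + r.num * c = 1 := by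
      have : ((r.den * d - (-r.num) * c : ℤ) : ℝ) = 1 := by rw [hdet]; simp
      push_cast at this; linarith
    have h : (c : ℝ) * α + d = c / r.den * (r.den * α - r.num) + 1 / r.den := by
      field_simp; linear_combination hdetR
    have h1 : (c : ℝ) / r.den ≤ 1 := (div_le_one hq).2 hcq
    rw [h, htwo]
    refine (abs_add_le _ _).trans ?_
    rw [abs_mul, abs_of_nonneg (div_nonneg hc0 hq.le), abs_of_pos (one_div_pos.2 hq)]
    have := mul_le_mul h1 (hrα.trans hn_inv) (abs_nonneg _) zero_le_one
    linarith
  have hmul : ∀ x : ℝ, |x| ≤ r.den → |x * α| ≤ n * |α| := fun x hx => by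
    rw [abs_mul]; gcongr; exact hx.trans hqn
  refine ⟨r.den, -r.num, c, d, hdet, ?_, ?_, ?_, ?_, ?_, hcd⟩
  · rw [Int.cast_natCast, abs_of_pos hq]; nlinarith
  · have h1 := hmul r.den (abs_of_pos hq).le
    have h2 := abs_sub_abs_le_abs_sub (r.num : ℝ) (r.den * α)
    rw [abs_sub_comm] at h2
    push_cast; rw [abs_neg]; linarith
  · rw [abs_of_nonneg hc0]; nlinarith
  · have h1 := hmul c ((abs_of_nonneg hc0).trans_le hcq)
    have h2 := abs_sub_abs_le_abs_sub (d : ℝ) (-(c * α))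
    rw [sub_neg_eq_add, add_comm, abs_neg] at h2
    linarith
  · push_cast
    rw [← sub_eq_add_neg, htwo]
    linarith [one_div_pos.2 hq]

/-- An irrational number that is not `LiouvilleWith` any exponent `p > 2` admits, at every large
scale, matrices in `SL₂(ℤ)` contracting `(x, y)` with exponent arbitrarily close to `1`. -/
theorem eventually_exists_sl_two {x y : ℝ} (hy : y ≠ 0) (hirr : Irrational (x / y))
    (hL : ∀ p > (2 : ℝ), ¬LiouvilleWith p (x / y)) {ω : ℝ} (hω0 : 0 < ω) (hω : ω < 1) :
    ∀ᶠ T : ℝ in atTop, ∃ a b c d : ℤ, a * d - b * c = 1 ∧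
      (|(a : ℝ)| ≤ T ∧ |(b : ℝ)| ≤ T ∧ |(c : ℝ)| ≤ T ∧ |(d : ℝ)| ≤ T) ∧
      |a * x + b * y| ≤ T ^ (-ω) ∧ |c * x + d * y| ≤ T ^ (-ω) := by
  set α := x / y with hα
  obtain ⟨s, hωs, hs1⟩ := exists_between hω
  have hs0 : 0 < s := hω0.trans hωs
  have hp : 2 < 1 + 1 / s := by
    have := (one_lt_div hs0).2 hs1
    linarith
  have hev := hL _ hp
  simp only [LiouvilleWith, not_exists, not_frequently] at hev
  obtain ⟨N, hN⟩ := eventually_atTop.1 (hev 1)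
  obtain ⟨ε, hεN, hε⟩ := ((hirr.eventually_forall_le_dist_cast_div_of_denom_le N).filter_mono
    nhdsWithin_le_nhds |>.and self_mem_nhdsWithin : ∀ᶠ ε in 𝓝[>] (0 : ℝ), _).exists
  replace hε : 0 < ε := hε
  set A := |α| + 2 with hA
  have hA0 : 0 < A := by positivity
  have hlarge : ∀ᶠ T : ℝ in atTop, |y| * 2 * A ^ s ≤ T ^ (s - ω) :=
    (tendsto_rpow_atTop (sub_pos.2 hωs)).eventually_ge_atTop _
  filter_upwards [hlarge, eventually_ge_atTop A, eventually_gt_atTop (A / ε)] with T hT hTA hTε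
  have hT0 : 0 < T := hA0.trans_le hTA
  set n := ⌊T / A⌋₊ with hn
  have hnT : (n : ℝ) * A ≤ T := (le_div_iff₀ hA0).1 (Nat.floor_le (by positivity))
  have hTn : T / A < n + 1 := Nat.lt_floor_add_one _
  have hnpos : 0 < n := Nat.floor_pos.2 ((one_le_div hA0).2 hTA)
  obtain ⟨r, hr, a, b, c, d, hdet, ha, hb, hc, hd, hab, hcd⟩ :=
    exists_sl_two_of_dirichlet α hnpos
  have hq : (0 : ℝ) < r.den := by exact_mod_cast r.den_pos
  have hq1 : (1 : ℝ) ≤ r.den := by exact_mod_cast r.den_pos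
  have hrden : N ≤ r.den := by
    by_contra! hlt
    have h1 := hεN r.den hlt.le r.num
    rw [Real.dist_eq, ← Rat.cast_def] at h1
    have h2 : 1 / (((n : ℝ) + 1) * r.den) ≤ 1 / (n + 1) := by
      gcongr; nlinarith
    have h3 : ε ≤ 1 / (n + 1) := h1.trans (hr.trans h2)
    have h4 : 1 / ε < n + 1 := by
      refine lt_trans ?_ hTn
      rw [div_lt_iff₀ hε] at hTε
      rwa [div_lt_div_iff₀ hε hA0, one_mul]
    exact absurd ((one_div_lt hε (by positivity)).1 h4) h3.not_gt
  have hlow : (r.den : ℝ) ^ (1 + 1 / s) ≥ ((n : ℝ) + 1) * r.den := by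
    have h1 := hN r.den hrden r.num
    rw [← Rat.cast_def, not_and, not_lt] at h1
    have h2 := (h1 (hirr.ne_rat r)).trans hr
    exact (one_div_le_one_div (by positivity) (by positivity)).1 h2
  have hqs : (T / A) ^ s ≤ r.den := by
    rw [Real.rpow_add hq, Real.rpow_one, mul_comm, ge_iff_le, mul_le_mul_iff_left₀ hq] at hlow
    calc (T / A) ^ s ≤ ((r.den : ℝ) ^ (1 / s)) ^ s := by
          gcongr; exact hTn.le.trans hlow
      _ = r.den := by rw [← Real.rpow_mul hq.le, one_div_mul_cancel hs0.ne', Real.rpow_one]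
  have hsmall : |y| * (2 / r.den) ≤ T ^ (-ω) := by
    have hTs : 0 < T ^ s := Real.rpow_pos_of_pos hT0 _
    rw [Real.div_rpow hT0.le hA0.le, div_le_iff₀ (by positivity)] at hqs
    have hsplit : T ^ (s - ω) = T ^ s * T ^ (-ω) := by
      rw [← Real.rpow_add hT0, sub_eq_add_neg]
    rw [hsplit] at hT
    have hAs : 0 < A ^ s := Real.rpow_pos_of_pos hA0 _
    have hTω : 0 < T ^ (-ω) := Real.rpow_pos_of_pos hT0 _
    rw [← mul_div_assoc, div_le_iff₀ hq]
    have := hT.trans (mul_le_mul_of_nonneg_right hqs hTω.le)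
    refine le_of_mul_le_mul_right ?_ hAs
    linarith
  have hform : ∀ k l : ℤ, |k * α + l| ≤ 2 / r.den → |k * x + l * y| ≤ T ^ (-ω) := by
    intro k l hkl
    have h : (k : ℝ) * x + l * y = y * (k * α + l) := by rw [hα]; field_simp
    rw [h, abs_mul]
    exact (mul_le_mul_of_nonneg_left hkl (abs_nonneg y)).trans hsmall
  exact ⟨a, b, c, d, hdet, ⟨ha.trans hnT, hb.trans hnT, hc.trans hnT, hd.trans hnT⟩,
    hform a b hab, hform c d hcd⟩

/-- The block-diagonal element of `SL₄(ℤ)` built from two integer `2 × 2` blocks. -/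
def blockDiagSL4 (a b c d a₂ b₂ c₂ d₂ : ℤ) (h : a * d - b * c = 1)
    (h₂ : a₂ * d₂ - b₂ * c₂ = 1) : Matrix.SpecialLinearGroup (Fin 4) ℤ :=
  ⟨!![a, b, 0, 0; c, d, 0, 0; 0, 0, a₂, b₂; 0, 0, c₂, d₂], by
    simp [Matrix.det_succ_row_zero, Fin.sum_univ_succ, Fin.succAbove]
    linear_combination (a₂ * d₂ - b₂ * c₂) * h + h₂⟩

theorem mnorm4_le_iff {γ : Matrix (Fin 4) (Fin 4) ℤ} {T : ℝ} (hT : 0 ≤ T) :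
    mnorm4 γ ≤ T ↔ ∀ i j, |(γ i j : ℝ)| ≤ T := by
  rw [mnorm4, ← Nat.le_floor_iff hT, Finset.sup_le_iff]
  simp [Nat.le_floor_iff hT, Nat.cast_natAbs]

theorem one_le_mnorm4 (γ : Matrix.SpecialLinearGroup (Fin 4) ℤ) :
    1 ≤ mnorm4 (γ : Matrix (Fin 4) (Fin 4) ℤ) := by
  by_contra! hlt
  have hzero : (γ : Matrix (Fin 4) (Fin 4) ℤ) = 0 := by
    rw [mnorm4] at hlt
    have h0 := Nat.lt_one_iff.1 (by exact_mod_cast hlt)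
    ext i j
    have := (Finset.sup_eq_bot_iff _ _).1 h0 (i, j) (Finset.mem_univ _)
    simpa using this
  have hdet := γ.det_coe
  rw [hzero, Matrix.det_zero] at hdet
  exact zero_ne_one hdet

theorem vnorm4_le_iff {w : Fin 4 → ℝ} {t : ℝ} : vnorm4 w ≤ t ↔ ∀ i, |w i| ≤ t := by
  simp [vnorm4, Fin.forall_fin_succ, and_assoc]

theorem vnorm4_sl4Act_pos (γ : Matrix.SpecialLinearGroup (Fin 4) ℤ) {v : Fin 4 → ℝ}
    (hv : v ≠ 0) : 0 < vnorm4 (sl4Act γ v) := by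
  by_contra! hle
  have hzero : sl4Act γ v = 0 :=
    funext fun i => abs_nonpos_iff.1 (vnorm4_le_iff.1 hle i)
  refine hv (Matrix.eq_zero_of_mulVec_eq_zero ?_ hzero)
  have hdet := (Int.cast_det (R := ℝ) (γ : Matrix (Fin 4) (Fin 4) ℤ)).symm
  rw [hdet, γ.det_coe]
  simp

theorem eventually_exists_sl4Act_le {v : Fin 4 → ℝ}
    (h01 : v 1 ≠ 0 ∧ Irrational (v 0 / v 1) ∧ ∀ p > (2 : ℝ), ¬LiouvilleWith p (v 0 / v 1))
    (h23 : v 3 ≠ 0 ∧ Irrational (v 2 / v 3) ∧ ∀ p > (2 : ℝ), ¬LiouvilleWith p (v 2 / v 3))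
    {ω : ℝ} (hω0 : 0 < ω) (hω : ω < 1) :
    ∀ᶠ T : ℝ in atTop, ∃ γ : Matrix.SpecialLinearGroup (Fin 4) ℤ,
      vnorm4 (sl4Act γ v) ≤ T ^ (-ω) ∧ mnorm4 (γ : Matrix (Fin 4) (Fin 4) ℤ) ≤ T := by
  filter_upwards [eventually_exists_sl_two h01.1 h01.2.1 h01.2.2 hω0 hω,
    eventually_exists_sl_two h23.1 h23.2.1 h23.2.2 hω0 hω, eventually_ge_atTop 0]
    with T ⟨a, b, c, d, h, ⟨ha, hb, hc, hd⟩, hab, hcd⟩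
      ⟨a₂, b₂, c₂, d₂, h₂, ⟨ha₂, hb₂, hc₂, hd₂⟩, hab₂, hcd₂⟩ hT
  refine ⟨blockDiagSL4 a b c d a₂ b₂ c₂ d₂ h h₂, ?_, ?_⟩
  · rw [vnorm4_le_iff]
    intro i
    fin_cases i <;>
      simpa [sl4Act, blockDiagSL4, Matrix.mulVec, dotProduct, Fin.sum_univ_succ]
  · rw [mnorm4_le_iff hT]
    intro i j
    fin_cases i <;> fin_cases j <;> simpa [blockDiagSL4]

/-- Approximation at every large scale with a positive exponent yields infinitely many
approximations with the same exponent. -/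
theorem infinite_setOf_sl4Act_le {v : Fin 4 → ℝ} (hv : v ≠ 0) {ω : ℝ} (hω : 0 < ω)
    (h : ∀ᶠ T : ℝ in atTop, ∃ γ : Matrix.SpecialLinearGroup (Fin 4) ℤ,
      vnorm4 (sl4Act γ v) ≤ T ^ (-ω) ∧ mnorm4 (γ : Matrix (Fin 4) (Fin 4) ℤ) ≤ T) :
    {γ : Matrix.SpecialLinearGroup (Fin 4) ℤ |
      vnorm4 (sl4Act γ v) ≤ mnorm4 (γ : Matrix (Fin 4) (Fin 4) ℤ) ^ (-ω)}.Infinite := by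
  intro hfin
  have hlt : ∀ᶠ T : ℝ in atTop, ∀ γ ∈ {γ : Matrix.SpecialLinearGroup (Fin 4) ℤ |
      vnorm4 (sl4Act γ v) ≤ mnorm4 (γ : Matrix (Fin 4) (Fin 4) ℤ) ^ (-ω)},
      T ^ (-ω) < vnorm4 (sl4Act γ v) :=
    hfin.eventually_all.2 fun γ _ =>
      (tendsto_rpow_neg_atTop hω).eventually_lt_const (vnorm4_sl4Act_pos γ hv)
  obtain ⟨T, ⟨γ, hγv, hγ⟩, hT⟩ := (h.and hlt).exists
  have hone := one_le_mnorm4 γ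
  refine (hT γ ?_).not_ge hγv
  exact hγv.trans (Real.rpow_le_rpow_of_nonpos (by linarith) hγ (by linarith))

theorem one_le_sSup_of_forall_between {P : ℝ → Prop} (h : ∀ ω : ℝ, 0 < ω → ω < 1 → P ω) :
    (1 : EReal) ≤ sSup {w : EReal | ∃ ω : ℝ, w = (ω : EReal) ∧ P ω} := by
  refine le_of_forall_lt fun c hc => ?_
  obtain ⟨ω, hcω, hω⟩ := EReal.lt_iff_exists_real_btwn.1 (max_lt hc zero_lt_one)
  rw [max_lt_iff] at hcω
  exact hcω.1.trans_le (le_sSup ⟨ω, rfl, h ω (by exact_mod_cast hcω.2) (by exact_mod_cast hω)⟩)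

/-- For Lebesgue-almost every `v ∈ ℝ⁴`: the supremum of all `ω` such that
`|γv| ≤ |γ|^{−ω}` for infinitely many `γ ∈ SL₄(ℤ)` is `≥ 1`, and the supremum of all `ω`
such that for every sufficiently large `T > 0` there is `γ ∈ SL₄(ℤ)` with `|γv| ≤ T^{−ω}`
and `|γ| ≤ T`, is also `≥ 1`. -/
theorem statement6 :
    ∀ᵐ v : Fin 4 → ℝ ∂MeasureTheory.volume,
      (1 : EReal) ≤ sSup {w : EReal | ∃ ω : ℝ, w = (ω : EReal) ∧
          {γ : Matrix.SpecialLinearGroup (Fin 4) ℤ |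
            vnorm4 (sl4Act γ v) ≤ mnorm4 (γ : Matrix (Fin 4) (Fin 4) ℤ) ^ (-ω)}.Infinite} ∧
      (1 : EReal) ≤ sSup {w : EReal | ∃ ω : ℝ, w = (ω : EReal) ∧
          ∃ T₀ : ℝ, ∀ T : ℝ, T₀ < T → 0 < T →
            ∃ γ : Matrix.SpecialLinearGroup (Fin 4) ℤ,
              vnorm4 (sl4Act γ v) ≤ T ^ (-ω) ∧
              mnorm4 (γ : Matrix (Fin 4) (Fin 4) ℤ) ≤ T} := by
  have hgood : ∀ᵐ x : ℝ, Irrational x ∧ ∀ p > (2 : ℝ), ¬LiouvilleWith p x :=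
    Real.ae_irrational.and ae_not_liouvilleWith
  filter_upwards [ae_coord_ne_zero_and_div hgood (0 : Fin 4) 0,
    ae_coord_ne_zero_and_div hgood (2 : Fin 4) 2] with v h01 h23
  have hv : v ≠ 0 := fun h => h01.1 (by simp [h])
  have happrox := fun ω (hω0 : 0 < ω) (hω : ω < 1) =>
    eventually_exists_sl4Act_le (ω := ω) h01 h23 hω0 hω
  refine ⟨one_le_sSup_of_forall_between fun ω hω0 hω =>
      infinite_setOf_sl4Act_le hv hω0 (happrox ω hω0 hω),
    one_le_sSup_of_forall_between fun ω hω0 hω => ?_⟩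
  obtain ⟨T₀, hT₀⟩ := eventually_atTop.1 (happrox ω hω0 hω)
  exact ⟨T₀, fun T hT _ => hT₀ T hT.le⟩

end
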